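/- For every natural number d ≥ 1, the sequence p_n = Σ_{k=0}^{n-1} C(n-1,k)(-1)^k Π_{j=0}^{k-1}(1 - (j+2)^{-d}) satisfies p_n ~ 1/(d n) as n → ∞, i.e., n·d·p_n → 1. -/

import Mathlib

open Filter

/-!
Write `a k = ∏_{j<k} (1 - (j+2)^{-d})` and let `R j m` be `m + 1` times the binomial transform of
`k ↦ a k / (k+2)^j` at `m`, so that `R 0 m = (m+1) p_{m+1}`. Multiplying a sequence by `k + 2` turns
its transform into a weighted difference, which makes `R (j+1)` relax towards `R j` at rate
`1 / (m+2)`, and `a k - a (k+1) = a k / (k+2)^d` closes these relations into a cycle of length `d`.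
Taking the `0`-th coordinate one time step ahead of the others makes this cyclic transport conserve
mass exactly, and the total mass is `1`. One step with rate `w` divides the squared distance from
equilibrium by at least `1 + C * w`, with `C > 0` depending only on `d`, so, the rates `1 / (m+2)`
having infinite sum, every coordinate tends to the mean `1 / d`.
-/

section Relaxation

open Finset Fintype
open scoped BigOperators Topology

variable {ι : Type*} [Fintype ι] {σ : Equiv.Perm ι} {w : ℝ} {x z x' : ι → ℝ}

theorem tendsto_zero_of_one_add_mul_le {w W : ℕ → ℝ} (hw : ∀ m, 0 ≤ w m) (hdiv : ¬Summable w)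
    (hW : ∀ m, 0 ≤ W m) (hstep : ∀ m, (1 + w m) * W (m + 1) ≤ W m) :
    Tendsto W atTop (𝓝 0) := by
  have hsum : Tendsto (fun m ↦ ∑ i ∈ range m, w i) atTop atTop :=
    (not_summable_iff_tendsto_nat_atTop_of_nonneg hw).mp hdiv
  have hsum_nonneg (m : ℕ) : 0 ≤ ∑ i ∈ range m, w i := sum_nonneg fun i _ ↦ hw i
  have hbound (m : ℕ) : (1 + ∑ i ∈ range m, w i) * W m ≤ W 0 := by
    induction m with
    | zero => simp
    | succ m ih =>
      calc (1 + ∑ i ∈ range (m + 1), w i) * W (m + 1)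
          ≤ (1 + ∑ i ∈ range m, w i) * ((1 + w m) * W (m + 1)) := by
            rw [sum_range_succ]
            nlinarith [mul_nonneg (mul_nonneg (hsum_nonneg m) (hw m)) (hW (m + 1))]
        _ ≤ (1 + ∑ i ∈ range m, w i) * W m := by
            have := hsum_nonneg m
            gcongr
            exact hstep m
        _ ≤ W 0 := ih
  have hdenom := tendsto_atTop_add_const_left atTop 1 hsum
  refine squeeze_zero hW (fun m ↦ ?_) (hdenom.const_div_atTop (W 0))
  rw [le_div_iff₀' (by linarith [hsum_nonneg m])]
  exact hbound m

/-- One step of discrete transport along the permutation `σ`: the amount `w * z i` flows from `i` to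
`σ i`, taking `x` to `x'`. The value `z i` driving the flow out of `i` may be taken before the step
(explicit scheme) or after it (implicit scheme), independently for each site. -/
structure IsTransportStep (σ : Equiv.Perm ι) (w : ℝ) (x z x' : ι → ℝ) : Prop where
  flow (i : ι) : x' (σ i) - x (σ i) = w * (z i - z (σ i))
  eq_or_eq (i : ι) : z i = x i ∨ z i = x' i

/-- The Dirichlet energy of `z` on the graph with an edge from each `i` to `σ i`. -/
def dirichletEnergy (σ : Equiv.Perm ι) (z : ι → ℝ) : ℝ := ∑ i, (z i - z (σ i)) ^ 2

/-- The squared Euclidean distance from `x` to the constant functions. -/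
noncomputable def sqDeviation (x : ι → ℝ) : ℝ := ∑ i, balance x i ^ 2

theorem dirichletEnergy_nonneg (σ : Equiv.Perm ι) (z : ι → ℝ) : 0 ≤ dirichletEnergy σ z :=
  sum_nonneg fun _ _ ↦ sq_nonneg _

theorem sqDeviation_nonneg (x : ι → ℝ) : 0 ≤ sqDeviation x := sum_nonneg fun _ _ ↦ sq_nonneg _

theorem sqDeviation_le_sum_sq_sub (x : ι → ℝ) (c : ℝ) : sqDeviation x ≤ ∑ i, (x i - c) ^ 2 := by
  have hexpand : ∑ i, (x i - c) ^ 2 = sqDeviation x + ∑ _i : ι, (𝔼 j, x j - c) ^ 2 :=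
    calc ∑ i, (x i - c) ^ 2
        = ∑ i, (balance x i ^ 2 + 2 * (𝔼 j, x j - c) * balance x i + (𝔼 j, x j - c) ^ 2) :=
          sum_congr rfl fun i _ ↦ by rw [balance_apply]; ring
      _ = sqDeviation x + ∑ _i : ι, (𝔼 j, x j - c) ^ 2 := by
          rw [sum_add_distrib, sum_add_distrib, ← mul_sum, sum_balance, mul_zero, add_zero,
            sqDeviation]
  rw [hexpand]
  exact le_add_of_nonneg_right (sum_nonneg fun _ _ ↦ sq_nonneg _)

theorem tendsto_of_sqDeviation_tendsto_zero {x : ℕ → ι → ℝ} {c : ℝ} (hmean : ∀ m, 𝔼 j, x m j = c)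
    (hx : Tendsto (fun m ↦ sqDeviation (x m)) atTop (𝓝 0)) (i : ι) :
    Tendsto (fun m ↦ x m i) atTop (𝓝 c) := by
  have hsq : Tendsto (fun m ↦ (x m i - c) ^ 2) atTop (𝓝 0) := by
    refine squeeze_zero (fun m ↦ sq_nonneg _) (fun m ↦ ?_) hx
    rw [← hmean m, ← balance_apply]
    exact single_le_sum (f := fun j ↦ balance (x m) j ^ 2) (fun _ _ ↦ sq_nonneg _) (mem_univ i)
  rw [← tendsto_sub_nhds_zero_iff, tendsto_zero_iff_abs_tendsto_zero]
  simpa [Function.comp_def, Real.sqrt_sq_eq_abs] using hsq.sqrt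

theorem abs_sub_apply_le_sqrt_dirichletEnergy (σ : Equiv.Perm ι) (z : ι → ℝ) (i : ι) :
    |z i - z (σ i)| ≤ √(dirichletEnergy σ z) :=
  Real.abs_le_sqrt <|
    single_le_sum (f := fun i ↦ (z i - z (σ i)) ^ 2) (fun _ _ ↦ sq_nonneg _) (mem_univ i)

theorem abs_sub_pow_apply_le (σ : Equiv.Perm ι) (z : ι → ℝ) (i : ι) (k : ℕ) :
    |z i - z ((σ ^ k) i)| ≤ k * √(dirichletEnergy σ z) := by
  induction k with
  | zero => simp
  | succ k ih =>
    have hedge := abs_sub_apply_le_sqrt_dirichletEnergy σ z ((σ ^ k) i)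
    have htri := abs_sub_le (z i) (z ((σ ^ k) i)) (z ((σ ^ (k + 1)) i))
    rw [pow_succ', Equiv.Perm.mul_apply] at htri ⊢
    rw [Nat.cast_add_one]
    linarith

namespace IsTransportStep

theorem sum_eq (h : IsTransportStep σ w x z x') : ∑ i, x' i = ∑ i, x i := by
  have : ∑ i, (x' (σ i) - x (σ i)) = 0 := by
    simp only [h.flow, ← mul_sum, sum_sub_distrib, Equiv.sum_comp σ z, sub_self, mul_zero]
  rw [sum_sub_distrib, Equiv.sum_comp σ x', Equiv.sum_comp σ x] at this
  exact sub_eq_zero.mp this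

theorem expect_eq (h : IsTransportStep σ w x z x') : 𝔼 i, x' i = 𝔼 i, x i := by
  rw [expect, expect, h.sum_eq]

theorem sum_sq_sub_le (h : IsTransportStep σ w x z x') (c : ℝ) :
    ∑ i, (x' i - c) ^ 2 ≤ ∑ i, (x i - c) ^ 2 - w * (1 - w) * dirichletEnergy σ z := by
  -- With `δ` the change at `σ i`, the left-hand side is `2 * (z (σ i) - c) * δ + δ ^ 2` in the
  -- explicit case and `2 * (z (σ i) - c) * δ - δ ^ 2` in the implicit one.
  have hsite (i : ι) : (x' (σ i) - c) ^ 2 - (x (σ i) - c) ^ 2 ≤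
      w * ((z i - c) ^ 2 - (z (σ i) - c) ^ 2) - w * (1 - w) * (z i - z (σ i)) ^ 2 := by
    have hflow := h.flow i
    rcases h.eq_or_eq (σ i) with hz | hz
    · rw [eq_add_of_sub_eq hflow, ← hz]
      exact le_of_eq (by ring)
    · have hx : x (σ i) = z (σ i) - w * (z i - z (σ i)) := by rw [hz] at hflow ⊢; linarith
      rw [hx, ← hz]
      nlinarith [sq_nonneg (w * (z i - z (σ i)))]
  have hsum := sum_le_sum fun i (_ : i ∈ univ) ↦ hsite i
  simp only [sum_sub_distrib, ← mul_sum, Equiv.sum_comp σ fun i ↦ (x' i - c) ^ 2,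
    Equiv.sum_comp σ fun i ↦ (x i - c) ^ 2, Equiv.sum_comp σ fun i ↦ (z i - c) ^ 2, sub_self,
    mul_zero] at hsum
  rw [dirichletEnergy]
  linarith

theorem abs_sub_le_sqrt_dirichletEnergy (h : IsTransportStep σ w x z x') (hw : |w| ≤ 1) (i : ι) :
    |z i - x' i| ≤ √(dirichletEnergy σ z) := by
  rcases h.eq_or_eq i with hz | hz
  · have hflow := h.flow (σ.symm i)
    have hedge := abs_sub_apply_le_sqrt_dirichletEnergy σ z (σ.symm i)
    rw [σ.apply_symm_apply] at hflow hedge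
    rw [abs_sub_comm, hz, hflow, abs_mul]
    exact (mul_le_of_le_one_left (abs_nonneg _) hw).trans hedge
  · simp [hz]

theorem sqDeviation_le (h : IsTransportStep σ w x z x') (hσ : σ.IsCycleOn Set.univ)
    (hw : |w| ≤ 1) : sqDeviation x' ≤ card ι ^ 3 * dirichletEnergy σ z := by
  rcases isEmpty_or_nonempty ι with _ | ⟨⟨o⟩⟩
  · simp [sqDeviation, dirichletEnergy]
  have hsite (i : ι) : |x' i - z o| ≤ card ι * √(dirichletEnergy σ z) := by
    obtain ⟨k, hk, rfl⟩ := Equiv.Perm.IsCycleOn.exists_pow_eq (s := univ) (by simpa using hσ)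
      (mem_univ o) (mem_univ i)
    have hk' : (k : ℝ) + 1 ≤ card ι := by exact_mod_cast hk
    calc |x' ((σ ^ k) o) - z o|
        ≤ |z o - z ((σ ^ k) o)| + |z ((σ ^ k) o) - x' ((σ ^ k) o)| := by
          rw [abs_sub_comm]
          exact abs_sub_le _ _ _
      _ ≤ (k + 1) * √(dirichletEnergy σ z) := by
          linarith [abs_sub_pow_apply_le σ z o k, h.abs_sub_le_sqrt_dirichletEnergy hw ((σ ^ k) o)]
      _ ≤ card ι * √(dirichletEnergy σ z) := by gcongr
  calc sqDeviation x' ≤ ∑ i, (x' i - z o) ^ 2 := sqDeviation_le_sum_sq_sub x' (z o)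
    _ ≤ ∑ _i : ι, (card ι * √(dirichletEnergy σ z)) ^ 2 :=
        sum_le_sum fun i _ ↦ sq_le_sq.mpr ((hsite i).trans (le_abs_self _))
    _ = card ι ^ 3 * dirichletEnergy σ z := by
        rw [sum_const, card_univ, nsmul_eq_mul, mul_pow, Real.sq_sqrt (dirichletEnergy_nonneg σ z)]
        ring

theorem one_add_mul_sqDeviation_le [Nonempty ι] (h : IsTransportStep σ w x z x')
    (hσ : σ.IsCycleOn Set.univ) (hw₀ : 0 ≤ w) (hw : w ≤ 1 / 2) :
    (1 + w / (2 * card ι ^ 3)) * sqDeviation x' ≤ sqDeviation x := by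
  have hpoincare : sqDeviation x' / card ι ^ 3 ≤ dirichletEnergy σ z := by
    rw [div_le_iff₀' (by positivity)]
    exact h.sqDeviation_le hσ (abs_le.mpr ⟨by linarith, by linarith⟩)
  have hdissipation : sqDeviation x' ≤ sqDeviation x - w * (1 - w) * dirichletEnergy σ z := by
    simpa only [sqDeviation, balance_apply, h.expect_eq] using h.sum_sq_sub_le (𝔼 i, x i)
  have hrate : w / 2 * (sqDeviation x' / card ι ^ 3) ≤ w * (1 - w) * dirichletEnergy σ z := by
    have hw' : w / 2 ≤ w * (1 - w) := by nlinarith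
    exact mul_le_mul hw' hpoincare (div_nonneg (sqDeviation_nonneg x') (by positivity))
      (by nlinarith)
  linear_combination hdissipation + hrate

theorem tendsto_expect {w : ℕ → ℝ} {x z : ℕ → ι → ℝ}
    (h : ∀ m, IsTransportStep σ (w m) (x m) (z m) (x (m + 1))) (hσ : σ.IsCycleOn Set.univ)
    (hw₀ : ∀ m, 0 ≤ w m) (hw : ∀ m, w m ≤ 1 / 2) (hdiv : ¬Summable w) (i : ι) :
    Tendsto (fun m ↦ x m i) atTop (𝓝 (𝔼 j, x 0 j)) := by
  have : Nonempty ι := ⟨i⟩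
  have hmean (m : ℕ) : 𝔼 j, x m j = 𝔼 j, x 0 j := by
    induction m with
    | zero => rfl
    | succ m ih => rw [(h m).expect_eq, ih]
  refine tendsto_of_sqDeviation_tendsto_zero hmean (tendsto_zero_of_one_add_mul_le
    (fun m ↦ div_nonneg (hw₀ m) (by positivity)) ?_ (fun m ↦ sqDeviation_nonneg (x m))
    fun m ↦ (h m).one_add_mul_sqDeviation_le hσ (hw₀ m) (hw m)) i
  rwa [summable_div_const_iff (by positivity)]

end IsTransportStep

theorem isCycleOn_finRotate (n : ℕ) : (finRotate n).IsCycleOn Set.univ := by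
  match n with
  | 0 | 1 => exact Equiv.Perm.isCycleOn_of_subsingleton _ _
  | n + 2 =>
    convert (isCycle_finRotate (n := n)).isCycleOn using 1
    exact (Set.eq_univ_of_forall fun i ↦ by simp).symm

end Relaxation

section BinomialTransform

open Finset

variable {A : Type*} [CommRing A]

/-- The binomial transform `m ↦ ∑ k ≤ m, (-1)^k * (m choose k) * c k` of the sequence `c`. -/
def binomialTransform (c : ℕ → A) (m : ℕ) : A :=
  ∑ k ∈ range (m + 1), (m.choose k : A) * (-1) ^ k * c k

theorem binomialTransform_succ (c : ℕ → A) (m : ℕ) :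
    binomialTransform c (m + 1) = binomialTransform (fun k ↦ c k - c (k + 1)) m := by
  have hpascal := sum_choose_succ_mul (fun k _ ↦ (-1) ^ k * c k) m
  simp only [binomialTransform, mul_assoc, hpascal, ← sum_add_distrib]
  exact sum_congr rfl fun k _ ↦ by ring

theorem binomialTransform_add_mul (s : A) (c : ℕ → A) (m : ℕ) :
    binomialTransform (fun k ↦ (k + s) * c k) (m + 1) =
      (m + 1 + s) * binomialTransform c (m + 1) - (m + 1) * binomialTransform c m := by
  have hlower : (m + 1) * binomialTransform c m = ∑ k ∈ range (m + 1 + 1),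
      (m + 1 - k) * (((m + 1).choose k : A) * (-1) ^ k * c k) := by
    rw [sum_range_succ, binomialTransform, mul_sum]
    push_cast
    rw [sub_self, zero_mul, add_zero]
    refine sum_congr rfl fun k hk ↦ ?_
    have habsorb := congrArg (Nat.cast (R := A)) (Nat.choose_mul_succ_eq m k)
    push_cast [Nat.cast_sub (mem_range.mp hk).le] at habsorb
    linear_combination (-1) ^ k * c k * habsorb
  rw [hlower, binomialTransform, binomialTransform, mul_sum, ← sum_sub_distrib]
  exact sum_congr rfl fun k _ ↦ by ring

end BinomialTransform

section ChainRecord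

open Finset

/-- The weights `∏_{j<k} (1 - g(j+1))`, `g(λ) = (λ+1)^{-d}`, whose binomial transform at `m` is the
chain-record probability `p_{m+1}`. -/
noncomputable def chainWeight (d k : ℕ) : ℝ := ∏ j ∈ range k, (1 - 1 / ((j : ℝ) + 2) ^ d)

/-- The rescaled transforms `(m + 1) * ∑ k ≤ m, (-1)^k * (m choose k) * chainWeight d k / (k+2)^j`.
Row `j = 0` is `(m + 1) * p_{m+1}`; the rows `j ≤ d` link `p_{m+1}` to `p_{m+2}`. -/
noncomputable def chainTable (d j m : ℕ) : ℝ :=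
  (m + 1) * binomialTransform (fun k ↦ chainWeight d k / ((k : ℝ) + 2) ^ j) m

theorem chainWeight_sub_succ (d k : ℕ) :
    chainWeight d k - chainWeight d (k + 1) = chainWeight d k / ((k : ℝ) + 2) ^ d := by
  rw [chainWeight, chainWeight, prod_range_succ]
  ring

theorem chainTable_apply_zero (d j : ℕ) : chainTable d j 0 = (1 / 2) ^ j := by
  simp [chainTable, binomialTransform, chainWeight]

theorem chainTable_succ_succ_sub (d j m : ℕ) :
    chainTable d (j + 1) (m + 1) - chainTable d (j + 1) m =
      1 / (m + 2) * (chainTable d j (m + 1) - chainTable d (j + 1) (m + 1)) := by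
  have htransform :=
    binomialTransform_add_mul (2 : ℝ) (fun k ↦ chainWeight d k / ((k : ℝ) + 2) ^ (j + 1)) m
  have hcancel (k : ℕ) : ((k : ℝ) + 2) * (chainWeight d k / ((k : ℝ) + 2) ^ (j + 1)) =
      chainWeight d k / ((k : ℝ) + 2) ^ j := by
    field_simp
    ring
  simp only [hcancel] at htransform
  simp only [chainTable, htransform]
  push_cast
  field_simp
  ring

theorem chainTable_zero_succ (d m : ℕ) :
    (m + 1) * chainTable d 0 (m + 1) = (m + 2) * chainTable d d m := by
  simp only [chainTable, pow_zero, div_one, binomialTransform_succ, chainWeight_sub_succ]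
  push_cast
  ring

theorem chainTable_zero_succ_succ_sub (e m : ℕ) :
    chainTable (e + 1) 0 (m + 2) - chainTable (e + 1) 0 (m + 1) =
      1 / (m + 2) * (chainTable (e + 1) e (m + 1) - chainTable (e + 1) 0 (m + 1)) := by
  have hrelax := chainTable_succ_succ_sub (e + 1) e m
  have hwrap := chainTable_zero_succ (e + 1) m
  have hwrap' := chainTable_zero_succ (e + 1) (m + 1)
  push_cast at hwrap'
  field_simp at hrelax ⊢
  linear_combination hwrap' - hwrap + hrelax

/-- The mass distribution on the cycle `Fin (e + 1)`, for `d = e + 1`. Coordinate `0` is taken one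
time step ahead of the others: with this choice the total mass is constant in `m`. -/
noncomputable def chainState (e m : ℕ) : Fin (e + 1) → ℝ :=
  Fin.cons (chainTable (e + 1) 0 (m + 1)) fun i ↦ chainTable (e + 1) (i + 1) m

theorem isTransportStep_chainState (e m : ℕ) :
    IsTransportStep (finRotate (e + 1)) (1 / (m + 2)) (chainState e m)
      (fun i ↦ chainTable (e + 1) i (m + 1)) (chainState e (m + 1)) where
  flow i := by
    refine Fin.lastCases ?_ (fun i ↦ ?_) i
    · simpa [chainState] using chainTable_zero_succ_succ_sub e m
    · simpa [chainState, Fin.coeSucc_eq_succ] using chainTable_succ_succ_sub (e + 1) i m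
  eq_or_eq i := by
    refine Fin.cases (Or.inl ?_) (fun i ↦ Or.inr ?_) i <;> simp [chainState]

theorem sum_chainState_zero (e : ℕ) : ∑ i, chainState e 0 i = 1 := by
  have hzero : chainTable (e + 1) 0 1 = (1 / 2) ^ e := by
    have := chainTable_zero_succ (e + 1) 0
    rw [chainTable_apply_zero] at this
    linear_combination this
  rw [Fin.sum_univ_succ]
  simp only [chainState, Fin.cons_zero, Fin.cons_succ, chainTable_apply_zero, hzero,
    pow_succ, ← sum_mul]
  rw [Fin.sum_univ_eq_sum_range fun i ↦ (1 / 2 : ℝ) ^ i, geom_sum_eq (by norm_num)]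
  ring

theorem not_summable_one_div_nat_add_two : ¬Summable fun m : ℕ ↦ 1 / ((m : ℝ) + 2) := by
  simpa using (summable_nat_add_iff (f := fun m : ℕ ↦ 1 / (m : ℝ)) 2).not.mpr
    Real.not_summable_one_div_natCast

theorem tendsto_chainTable_row_zero (e : ℕ) :
    Tendsto (chainTable (e + 1) 0) atTop (nhds (1 / ((e : ℝ) + 1))) := by
  rw [← tendsto_add_atTop_iff_nat 1]
  have hlim := IsTransportStep.tendsto_expect (isTransportStep_chainState e)
    (isCycleOn_finRotate (e + 1)) (fun m ↦ by positivity)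
    (fun m ↦ one_div_le_one_div_of_le two_pos (by linarith [Nat.cast_nonneg (α := ℝ) m]))
    not_summable_one_div_nat_add_two 0
  rw [Fintype.expect_eq_sum_div_card, sum_chainState_zero] at hlim
  simpa [chainState] using hlim

end ChainRecord

/-- For every `d ≥ 1`, the chain-record probabilities
`p_n = Σ_{k=0}^{n-1} C(n-1,k)(-1)^k Π_{j<k}(1 - (j+2)^{-d})` satisfy `p_n ~ 1/(dn)`,
i.e. `n·d·p_n → 1` as `n → ∞`. -/
theorem chain_record_prob_asymptotics (d : ℕ) (hd : 1 ≤ d) :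
    Tendsto (fun n : ℕ =>
        (n : ℝ) * d * ∑ k ∈ Finset.range n, ((n - 1).choose k : ℝ) * (-1) ^ k *
            ∏ j ∈ Finset.range k, (1 - 1 / ((j : ℝ) + 2) ^ d))
      atTop (nhds 1) := by
  obtain ⟨e, rfl⟩ := Nat.exists_eq_add_of_le' hd
  rw [← tendsto_add_atTop_iff_nat 1]
  have hlim := (tendsto_chainTable_row_zero e).const_mul ((e : ℝ) + 1)
  rw [mul_one_div_cancel (by positivity)] at hlim
  refine hlim.congr fun m ↦ ?_
  simp only [chainTable, binomialTransform, chainWeight, pow_zero, div_one, Nat.add_sub_cancel]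
  push_cast
  ring
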